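/- arXiv:2510.22393 — 2 statements merged into one kernel-verified Lean document; each statement's English description precedes it below -/
import Mathlib

section
/- Let 1 ≤ p < n and assume δ_p := λ_p − λ_{p+1} > 0 and δ_p ≥ 4‖E‖. Then ‖Π̃_p − Π_p‖ ≤ 2F₁, where F₁ = (1/(2π))(M₁ + M₂ + M₃ + M₄) is (2π)⁻¹ times the integral of ‖(zI − A)⁻¹ E (zI − A)⁻¹‖ over the rectangular contour with vertices x₀ ± iT and x₁ ± iT, where x₀ = λ_p − δ_p/2, x₁ = 2σ₁, T = 2σ₁. -/
open Matrix

/-- The spectral norm (ℓ²→ℓ² operator norm) of a matrix. -/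
noncomputable def specNorm {𝕜 : Type*} [RCLike 𝕜] {m n : ℕ}
    (M : Matrix (Fin m) (Fin n) 𝕜) : ℝ :=
  ‖LinearMap.toContinuousLinearMap (Matrix.toEuclideanLin M)‖

/-- The resolvent `(zI − A)⁻¹` of a real matrix `A`, regarded as a complex matrix. -/
noncomputable def res {n : ℕ} (A : Matrix (Fin n) (Fin n) ℝ) (z : ℂ) :
    Matrix (Fin n) (Fin n) ℂ :=
  (z • (1 : Matrix (Fin n) (Fin n) ℂ) - A.map Complex.ofReal)⁻¹

open scoped Matrix.Norms.L2Operator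

theorem specNorm_eq {𝕜 : Type*} [RCLike 𝕜] {m n : ℕ} (M : Matrix (Fin m) (Fin n) 𝕜) :
    specNorm M = ‖M‖ := rfl

/-- complexified projection -/
noncomputable def PC {n : ℕ} (w : Fin n → ℝ) : Matrix (Fin n) (Fin n) ℂ :=
  (vecMulVec w w).map Complex.ofReal

section spec
variable {n : ℕ} (A : Matrix (Fin n) (Fin n) ℝ) (w : Fin n → Fin n → ℝ) (l : Fin n → ℝ)

theorem on_mul (hon : ∀ i j, w i ⬝ᵥ w j = if i = j then 1 else 0) :
    (Matrix.of w) * (Matrix.of w)ᵀ = 1 := by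
  ext i j
  rw [Matrix.mul_apply, Matrix.one_apply, ← hon i j]
  rfl

theorem on_mul' (hon : ∀ i j, w i ⬝ᵥ w j = if i = j then 1 else 0) :
    (Matrix.of w)ᵀ * (Matrix.of w) = 1 :=
  _root_.mul_eq_one_comm.mp (on_mul w hon)

theorem sum_PC_smul (c : Fin n → ℂ) :
    ∑ i, c i • PC (w i) = ((Matrix.of w).map Complex.ofReal)ᵀ * diagonal c *
      ((Matrix.of w).map Complex.ofReal) := by
  ext a b
  rw [Matrix.mul_apply]
  simp only [Matrix.mul_diagonal]
  simp only [Matrix.sum_apply, Matrix.smul_apply, PC, Matrix.map_apply, vecMulVec_apply,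
    Matrix.transpose_apply, Matrix.of_apply, smul_eq_mul, Complex.ofReal_mul]
  refine Finset.sum_congr rfl fun i _ => by ring

theorem map_mul_C (X Y : Matrix (Fin n) (Fin n) ℝ) :
    (X * Y).map Complex.ofReal = X.map Complex.ofReal * Y.map Complex.ofReal := by
  exact Matrix.map_mul (f := Complex.ofRealHom)

theorem sum_PC (hon : ∀ i j, w i ⬝ᵥ w j = if i = j then 1 else 0) :
    ∑ i, PC (w i) = 1 := by
  have := sum_PC_smul w (fun _ => 1)
  simp only [one_smul, diagonal_one, mul_one] at this
  rw [this, ← Matrix.transpose_map, ← map_mul_C, on_mul' w hon]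
  exact Matrix.map_one _ (by simp) (by simp)

theorem A_mul_PC (i) (heig : A *ᵥ w i = l i • w i) :
    A.map Complex.ofReal * PC (w i) = (l i : ℂ) • PC (w i) := by
  rw [PC, ← map_mul_C, Matrix.mul_vecMulVec, heig]
  ext a b
  simp [vecMulVec_apply]

theorem res_eq (hon : ∀ i j, w i ⬝ᵥ w j = if i = j then 1 else 0)
    (heig : ∀ i, A *ᵥ w i = l i • w i) (z : ℂ) (hz : ∀ i, z ≠ l i) :
    (z • (1 : Matrix (Fin n) (Fin n) ℂ) - A.map Complex.ofReal) *
      (∑ i, (z - l i)⁻¹ • PC (w i)) = 1 := by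
  rw [Finset.mul_sum]
  refine Eq.trans ?_ (sum_PC w hon)
  refine Finset.sum_congr rfl fun i _ => ?_
  rw [Matrix.mul_smul, sub_mul, A_mul_PC A w l i (heig i), smul_mul_assoc, one_mul, ← sub_smul,
    smul_smul, inv_mul_cancel₀ (sub_ne_zero.mpr (hz i)), one_smul]

theorem res_eq' (hon : ∀ i j, w i ⬝ᵥ w j = if i = j then 1 else 0)
    (heig : ∀ i, A *ᵥ w i = l i • w i) (z : ℂ) (hz : ∀ i, z ≠ l i) :
    res A z = ∑ i, (z - l i)⁻¹ • PC (w i) :=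
  Matrix.inv_eq_right_inv (res_eq A w l hon heig z hz)

theorem norm_sum_PC_le (hon : ∀ i j, w i ⬝ᵥ w j = if i = j then 1 else 0) (c : Fin n → ℂ) (K : ℝ)
    (hK : 0 ≤ K) (hc : ∀ i, ‖c i‖ ≤ K) : ‖∑ i, c i • PC (w i)‖ ≤ K := by
  rw [sum_PC_smul]
  set U := (Matrix.of w).map Complex.ofReal with hU
  have hs : Uᵀ = star U := by
    ext a b
    simp [hU, Matrix.star_apply]
  have hmem : U ∈ unitary (Matrix (Fin n) (Fin n) ℂ) := by
    rw [Unitary.mem_iff, ← hs, hU, ← Matrix.transpose_map, ← map_mul_C, ← map_mul_C, on_mul w hon,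
      on_mul' w hon]
    simp
  rw [hs, CStarRing.norm_mul_mem_unitary _ hmem,
    CStarRing.norm_mem_unitary_mul _ (Unitary.star_mem hmem), Matrix.l2_opNorm_diagonal]
  exact (pi_norm_le_iff_of_nonneg hK).mpr hc

theorem abs_l_le (i) (hon : w i ⬝ᵥ w i = 1) (heig : A *ᵥ w i = l i • w i) :
    |l i| ≤ ‖A‖ := by
  have h := Matrix.l2_opNorm_mulVec A (WithLp.toLp 2 (w i))
  have h1 : ‖(WithLp.toLp 2 (w i) : EuclideanSpace ℝ (Fin n))‖ = 1 := by
    rw [EuclideanSpace.norm_eq, Real.sqrt_eq_one]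
    simpa [dotProduct, sq] using hon
  have h2 : (WithLp.toLp 2 (A *ᵥ w i) : EuclideanSpace ℝ (Fin n)) = l i • WithLp.toLp 2 (w i) := by
    rw [heig]; rfl
  simp only [] at h
  rw [h1] at h
  have : ‖(WithLp.toLp 2 (A *ᵥ w i) : EuclideanSpace ℝ (Fin n))‖ ≤ ‖A‖ * 1 := h
  rwa [h2, norm_smul, h1, mul_one, mul_one] at this
end spec

theorem norm_le_map {n : ℕ} (X : Matrix (Fin n) (Fin n) ℝ) : ‖X‖ ≤ ‖X.map Complex.ofReal‖ := by
  refine ContinuousLinearMap.opNorm_le_bound _ (norm_nonneg _) fun v => ?_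
  have h := Matrix.l2_opNorm_mulVec (X.map Complex.ofReal) (WithLp.toLp 2 (fun i => (v i : ℂ)))
  have h1 : ‖(WithLp.toLp 2 (fun i => (v i : ℂ)) : EuclideanSpace ℂ (Fin n))‖ = ‖v‖ := by
    simp [EuclideanSpace.norm_eq]
  rw [h1] at h
  refine le_trans (le_of_eq ?_) h
  rw [EuclideanSpace.norm_eq, EuclideanSpace.norm_eq]
  congr 1
  refine Finset.sum_congr rfl fun i _ => ?_
  have : ((X.map Complex.ofReal) *ᵥ (fun i => (v i : ℂ))) i = (((X *ᵥ v.ofLp) i : ℝ) : ℂ) := by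
    simp [Matrix.mulVec, dotProduct]
  change _ = ‖((X.map Complex.ofReal) *ᵥ (fun i => (v i : ℂ))) i‖ ^ 2
  rw [this, Complex.norm_real]
  rfl

theorem norm_map_le {n : ℕ} (X : Matrix (Fin n) (Fin n) ℝ) : ‖X.map Complex.ofReal‖ ≤ ‖X‖ := by
  refine ContinuousLinearMap.opNorm_le_bound _ (norm_nonneg _) fun v => ?_
  set a : EuclideanSpace ℝ (Fin n) := WithLp.toLp 2 (fun i => (v i).re) with ha
  set b : EuclideanSpace ℝ (Fin n) := WithLp.toLp 2 (fun i => (v i).im) with hb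
  have h1 := Matrix.l2_opNorm_mulVec X a
  have h2 := Matrix.l2_opNorm_mulVec X b
  refine abs_le_of_sq_le_sq' ?_ (by positivity) |>.2
  have h3 : ‖v‖ ^ 2 = ‖a‖ ^ 2 + ‖b‖ ^ 2 := by
    simp only [EuclideanSpace.norm_sq_eq, ← Finset.sum_add_distrib, ha, hb]
    refine Finset.sum_congr rfl fun i _ => ?_
    rw [Complex.sq_norm, Complex.normSq_apply]
    simp [sq]
  have h4 : ‖(WithLp.toLp 2 ((X.map Complex.ofReal) *ᵥ v.ofLp) : EuclideanSpace ℂ (Fin n))‖ ^ 2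
      = ‖(WithLp.toLp 2 (X *ᵥ a.ofLp) : EuclideanSpace ℝ (Fin n))‖ ^ 2 +
        ‖(WithLp.toLp 2 (X *ᵥ b.ofLp) : EuclideanSpace ℝ (Fin n))‖ ^ 2 := by
    simp only [EuclideanSpace.norm_sq_eq, ← Finset.sum_add_distrib]
    refine Finset.sum_congr rfl fun i _ => ?_
    rw [Complex.sq_norm, Complex.normSq_apply]
    simp [sq, Matrix.mulVec, dotProduct, ha, hb]
  change ‖(WithLp.toLp 2 ((X.map Complex.ofReal) *ᵥ v.ofLp) : EuclideanSpace ℂ (Fin n))‖ ^ 2 ≤ _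
  rw [h4, mul_pow, h3, mul_add, ← mul_pow, ← mul_pow]
  exact add_le_add (pow_le_pow_left₀ (norm_nonneg _) h1 2) (pow_le_pow_left₀ (norm_nonneg _) h2 2)

noncomputable def rect {V : Type*} [NormedAddCommGroup V] [NormedSpace ℂ V] (x₀ x₁ T : ℝ)
    (f : ℂ → V) : V :=
  (∫ x in x₀..x₁, f (x - T * Complex.I)) - (∫ x in x₀..x₁, f (x + T * Complex.I))
    + Complex.I • (∫ t in (-T)..T, f (x₁ + t * Complex.I))
    - Complex.I • (∫ t in (-T)..T, f (x₀ + t * Complex.I))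

theorem rect_zero {x₀ x₁ T : ℝ} (h : x₀ ≤ x₁) (l : ℝ) (hl : l < x₀) :
    rect x₀ x₁ T (fun z => (z - l)⁻¹) = 0 := by
  have := Complex.integral_boundary_rect_eq_zero_of_differentiableOn (fun z : ℂ => (z - l)⁻¹)
    (⟨x₀, -T⟩ : ℂ) (⟨x₁, T⟩ : ℂ) (by
      intro z hz
      have hz1 : z.re ∈ Set.Icc x₀ x₁ := by
        have := hz.1
        simpa [Set.uIcc_of_le h] using this
      have : z - l ≠ 0 := by
        intro h0
        have := congrArg Complex.re h0
        simp at this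
        linarith [hz1.1]
      exact (DifferentiableAt.inv (h := fun z : ℂ => z - l) (by fun_prop) this).differentiableWithinAt)
  simp only [rect]
  simpa [sub_eq_add_neg] using this

theorem seg {f : ℝ → ℂ} {c : ℂ} {a b : ℝ} (hf : ∀ x, HasDerivAt f c x)
    (hs : ∀ x ∈ Set.uIcc a b, f x ∈ Complex.slitPlane) :
    c * ∫ x in a..b, (f x)⁻¹ = Complex.log (f b) - Complex.log (f a) := by
  rw [← intervalIntegral.integral_const_mul]
  refine intervalIntegral.integral_eq_sub_of_hasDerivAt (f := fun x => Complex.log (f x))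
    (fun x hx => ?_) ?_
  · have := (hf x).clog_real (hs x hx)
    rwa [div_eq_mul_inv] at this
  · apply ContinuousOn.intervalIntegrable
    refine continuousOn_const.mul (ContinuousOn.inv₀ ?_ ?_)
    · exact fun x _ => (hf x).continuousAt.continuousWithinAt
    · exact fun x hx => Complex.slitPlane_ne_zero (hs x hx)

theorem log_neg_pos {w : ℂ} (hw : 0 < w.im) : Complex.log w = Complex.log (-w) + Real.pi * Complex.I := by
  apply Complex.ext
  · simp [Complex.log_re]
  · simp [Complex.log_im, Complex.arg_neg_eq_arg_sub_pi_of_im_pos hw]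

theorem log_neg_neg {w : ℂ} (hw : w.im < 0) : Complex.log w = Complex.log (-w) - Real.pi * Complex.I := by
  apply Complex.ext
  · simp [Complex.log_re]
  · simp [Complex.log_im, Complex.arg_neg_eq_arg_add_pi_of_im_neg hw]

theorem rect_in {x₀ x₁ T : ℝ} (hT : 0 < T) (l : ℝ) (hl : x₀ < l) (hl1 : l < x₁) :
    rect x₀ x₁ T (fun z => (z - l)⁻¹) = 2 * Real.pi * Complex.I := by
  have hd1 : ∀ c : ℂ, ∀ x : ℝ, HasDerivAt (fun x : ℝ => (x : ℂ) + c) 1 x := fun c x =>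
    Complex.ofRealCLM.hasDerivAt.add_const c
  have hd2 : ∀ c d : ℂ, ∀ x : ℝ, HasDerivAt (fun x : ℝ => (x : ℂ) * d + c) d x := fun c d x => by
    have := ((Complex.ofRealCLM.hasDerivAt (x := x)).mul_const d).add_const c
    simpa using this
  have e1 := seg (a := x₀) (b := x₁) (hd1 (-(T * Complex.I) - l)) (by
    intro x _
    right
    simp; exact hT.ne')
  have e2 := seg (a := x₀) (b := x₁) (hd1 ((T * Complex.I) - l)) (by
    intro x _
    right
    simp; exact hT.ne')
  have e3 := seg (a := -T) (b := T) (hd2 (x₁ - l) Complex.I) (by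
    intro x _
    left
    simp; exact hl1)
  have e4 := seg (a := -T) (b := T) (hd2 (l - x₀) (-Complex.I)) (by
    intro x _
    left
    simp; exact hl)
  simp only [rect, smul_eq_mul]
  have r1 : (∫ x in x₀..x₁, ((x : ℂ) - T * Complex.I - l)⁻¹) =
      ∫ x in x₀..x₁, ((x : ℂ) + (-(T * Complex.I) - l))⁻¹ := by
    congr 1; ext x; congr 1; ring
  have r2 : (∫ x in x₀..x₁, ((x : ℂ) + T * Complex.I - l)⁻¹) =
      ∫ x in x₀..x₁, ((x : ℂ) + ((T * Complex.I) - l))⁻¹ := by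
    congr 1; ext x; congr 1; ring
  have r3 : (∫ t in (-T)..T, ((x₁ : ℂ) + t * Complex.I - l)⁻¹) =
      ∫ t in (-T)..T, ((t : ℂ) * Complex.I + (x₁ - l))⁻¹ := by
    congr 1; ext x; congr 1; ring
  have r4 : (∫ t in (-T)..T, ((x₀ : ℂ) + t * Complex.I - l)⁻¹) =
      - ∫ t in (-T)..T, ((t : ℂ) * (-Complex.I) + (l - x₀))⁻¹ := by
    rw [← intervalIntegral.integral_neg]
    congr 1; ext x; rw [← inv_neg]; congr 1; ring
  rw [r1, r2, r3, r4]
  rw [one_mul] at e1 e2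
  rw [e1, e2, e3]
  have e4' : Complex.I * -(∫ t in (-T)..T, ((t : ℂ) * (-Complex.I) + (l - x₀))⁻¹) =
    Complex.log ((T : ℂ) * (-Complex.I) + (l - x₀)) - Complex.log (((-T : ℝ) : ℂ) * (-Complex.I) + (l - x₀)) := by
    rw [← e4]; ring
  rw [e4']
  have l1 := log_neg_pos (w := (x₀ : ℂ) + (T * Complex.I - l)) (by simpa using hT)
  have l2 := log_neg_neg (w := (x₀ : ℂ) + (-(T * Complex.I) - l)) (by simpa using hT)
  rw [l1, l2]
  push_cast
  ring_nf

theorem quad_E {n : ℕ} (E : Matrix (Fin n) (Fin n) ℝ) (x : Fin n → ℝ) :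
    |x ⬝ᵥ E *ᵥ x| ≤ ‖E‖ * (x ⬝ᵥ x) := by
  set v : EuclideanSpace ℝ (Fin n) := WithLp.toLp 2 x
  have h := Matrix.l2_opNorm_mulVec E v
  have h1 : x ⬝ᵥ x = ‖v‖ * ‖v‖ := by
    rw [← sq, EuclideanSpace.norm_sq_eq]
    simp [v, dotProduct, sq]
  have h2 := abs_real_inner_le_norm v (WithLp.toLp 2 (E *ᵥ v.ofLp))
  have h3 : inner ℝ v (WithLp.toLp 2 (E *ᵥ v.ofLp)) = x ⬝ᵥ E *ᵥ x := by
    simp [v, PiLp.inner_apply, dotProduct, mul_comm]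
  rw [h3] at h2
  rw [h1]
  calc _ ≤ _ := h2
    _ ≤ ‖v‖ * (‖E‖ * ‖v‖) := mul_le_mul_of_nonneg_left h (norm_nonneg _)
    _ = _ := by ring

/-- expansion in an orthonormal basis -/
theorem expand {n : ℕ} (w : Fin n → Fin n → ℝ)
    (h : (Matrix.of w)ᵀ * (Matrix.of w) = 1) (x y : Fin n → ℝ) :
    x ⬝ᵥ y = ∑ i, (w i ⬝ᵥ x) * (w i ⬝ᵥ y) := by
  have : x ⬝ᵥ y = (Matrix.of w *ᵥ x) ⬝ᵥ (Matrix.of w *ᵥ y) := by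
    rw [Matrix.dotProduct_mulVec, Matrix.vecMul_mulVec, h, Matrix.vecMul_one]
  rw [this]; rfl

theorem expand_quad {n : ℕ} (A : Matrix (Fin n) (Fin n) ℝ) (hA : A.IsSymm) (w : Fin n → Fin n → ℝ)
    (l : Fin n → ℝ) (heig : ∀ i, A *ᵥ w i = l i • w i)
    (h : (Matrix.of w)ᵀ * (Matrix.of w) = 1) (x : Fin n → ℝ) :
    x ⬝ᵥ A *ᵥ x = ∑ i, l i * (w i ⬝ᵥ x) ^ 2 := by
  rw [expand w h]
  refine Finset.sum_congr rfl fun i _ => ?_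
  rw [Matrix.dotProduct_mulVec (w i), ← Matrix.mulVec_transpose, hA.eq, heig, smul_dotProduct, smul_eq_mul]
  ring

theorem weyl {n : ℕ} (A E : Matrix (Fin n) (Fin n) ℝ) (hA : A.IsSymm) (hE : E.IsSymm)
    (w tw : Fin n → Fin n → ℝ) (l tl : Fin n → ℝ)
    (hw : (Matrix.of w)ᵀ * (Matrix.of w) = 1) (htw : (Matrix.of tw)ᵀ * (Matrix.of tw) = 1)
    (heig : ∀ i, A *ᵥ w i = l i • w i) (hteig : ∀ i, (A + E) *ᵥ tw i = tl i • tw i)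
    (hl : Antitone l) (htl : Antitone tl) (p : Fin n) : l p ≤ tl p + ‖E‖ := by
  -- a nonzero vector orthogonal to `w i`, `i > p`, and `tw i`, `i < p`
  obtain ⟨x, hx0, hx1, hx2⟩ : ∃ x : Fin n → ℝ, x ≠ 0 ∧ (∀ i, p < i → w i ⬝ᵥ x = 0) ∧
      (∀ i, i < p → tw i ⬝ᵥ x = 0) := by
    let B : Matrix (Fin n) (Fin n) ℝ := Matrix.of fun i => if p < i then w i else if i < p then tw i else 0
    have hB : B.det = 0 := Matrix.det_eq_zero_of_row_eq_zero p (by intro j; simp [B])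
    obtain ⟨x, hx, hBx⟩ := Matrix.exists_mulVec_eq_zero_iff.mpr hB
    refine ⟨x, hx, fun i hi => ?_, fun i hi => ?_⟩
    · have := congrFun hBx i
      simpa [Matrix.mulVec, B, hi] using this
    · have := congrFun hBx i
      simpa [Matrix.mulVec, B, hi, hi.not_gt] using this
  have hpos : 0 < x ⬝ᵥ x := by
    have := Matrix.dotProduct_star_self_pos_iff.mpr hx0
    simpa using this
  have q1 : l p * (x ⬝ᵥ x) ≤ x ⬝ᵥ A *ᵥ x := by
    rw [expand_quad A hA w l heig hw, expand w hw x x, Finset.mul_sum]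
    refine Finset.sum_le_sum fun i _ => ?_
    rcases lt_or_ge p i with h | h
    · simp [hx1 i h]
    · rw [← sq]; exact mul_le_mul_of_nonneg_right (hl h) (sq_nonneg _)
  have q2 : x ⬝ᵥ (A + E) *ᵥ x ≤ tl p * (x ⬝ᵥ x) := by
    rw [expand_quad (A + E) (hA.add hE) tw tl hteig htw, expand tw htw x x, Finset.mul_sum]
    refine Finset.sum_le_sum fun i _ => ?_
    rcases lt_or_ge i p with h | h
    · simp [hx2 i h]
    · rw [← sq]; exact mul_le_mul_of_nonneg_right (htl h) (sq_nonneg _)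
  have q3 := (abs_le.mp (quad_E E x)).1
  rw [Matrix.add_mulVec, dotProduct_add] at q2
  refine le_of_mul_le_mul_right ?_ hpos
  linarith

/-- the boundary of the rectangle -/
def bd (x₀ x₁ T : ℝ) : Set ℂ :=
  {z | (z.re ∈ Set.Icc x₀ x₁ ∧ |z.im| = T) ∨ ((z.re = x₀ ∨ z.re = x₁) ∧ |z.im| ≤ T)}

section rectangle
variable {V : Type*} [NormedAddCommGroup V] {x₀ x₁ T : ℝ}

theorem bd_1 (hT : 0 < T) {x : ℝ} (hx : x ∈ Set.Icc x₀ x₁) :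
    (x : ℂ) - T * Complex.I ∈ bd x₀ x₁ T := by
  left; simpa [abs_of_pos hT] using hx

theorem bd_2 (hT : 0 < T) {x : ℝ} (hx : x ∈ Set.Icc x₀ x₁) :
    (x : ℂ) + T * Complex.I ∈ bd x₀ x₁ T := by
  left; simpa [abs_of_pos hT] using hx

theorem bd_3 {t : ℝ} (ht : t ∈ Set.Icc (-T) T) :
    (x₁ : ℂ) + t * Complex.I ∈ bd x₀ x₁ T := by
  right; simpa [abs_le] using ht

theorem bd_4 {t : ℝ} (ht : t ∈ Set.Icc (-T) T) :
    (x₀ : ℂ) + t * Complex.I ∈ bd x₀ x₁ T := by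
  right; simpa [abs_le] using ht

theorem int_1 (h : x₀ ≤ x₁) (hT : 0 < T) {f : ℂ → V} (hf : ContinuousOn f (bd x₀ x₁ T)) :
    IntervalIntegrable (fun x : ℝ => f (x - T * Complex.I)) MeasureTheory.volume x₀ x₁ := by
  apply ContinuousOn.intervalIntegrable
  rw [Set.uIcc_of_le h]
  exact hf.comp (by fun_prop) fun x hx => bd_1 hT hx

theorem int_2 (h : x₀ ≤ x₁) (hT : 0 < T) {f : ℂ → V} (hf : ContinuousOn f (bd x₀ x₁ T)) :
    IntervalIntegrable (fun x : ℝ => f (x + T * Complex.I)) MeasureTheory.volume x₀ x₁ := by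
  apply ContinuousOn.intervalIntegrable
  rw [Set.uIcc_of_le h]
  exact hf.comp (by fun_prop) fun x hx => bd_2 hT hx

theorem int_3 (hT : 0 < T) {f : ℂ → V} (hf : ContinuousOn f (bd x₀ x₁ T)) :
    IntervalIntegrable (fun t : ℝ => f (x₁ + t * Complex.I)) MeasureTheory.volume (-T) T := by
  apply ContinuousOn.intervalIntegrable
  rw [Set.uIcc_of_le (by linarith)]
  exact hf.comp (by fun_prop) fun x hx => bd_3 hx

theorem int_4 (hT : 0 < T) {f : ℂ → V} (hf : ContinuousOn f (bd x₀ x₁ T)) :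
    IntervalIntegrable (fun t : ℝ => f (x₀ + t * Complex.I)) MeasureTheory.volume (-T) T := by
  apply ContinuousOn.intervalIntegrable
  rw [Set.uIcc_of_le (by linarith)]
  exact hf.comp (by fun_prop) fun x hx => bd_4 hx

variable [NormedSpace ℂ V]

theorem rect_sub (h : x₀ ≤ x₁) (hT : 0 < T) {f g : ℂ → V} (hf : ContinuousOn f (bd x₀ x₁ T))
    (hg : ContinuousOn g (bd x₀ x₁ T)) :
    rect x₀ x₁ T (fun z => f z - g z) = rect x₀ x₁ T f - rect x₀ x₁ T g := by
  simp only [rect]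
  rw [intervalIntegral.integral_sub (int_1 h hT hf) (int_1 h hT hg),
    intervalIntegral.integral_sub (int_2 h hT hf) (int_2 h hT hg),
    intervalIntegral.integral_sub (int_3 hT hf) (int_3 hT hg),
    intervalIntegral.integral_sub (int_4 hT hf) (int_4 hT hg)]
  simp only [smul_sub]
  abel

theorem rect_sum [CompleteSpace V] (h : x₀ ≤ x₁) (hT : 0 < T) {ι : Type*} [Fintype ι] (c : ι → ℂ → ℂ) (P : ι → V)
    (hc : ∀ i, ContinuousOn (c i) (bd x₀ x₁ T)) :
    rect x₀ x₁ T (fun z => ∑ i, c i z • P i) = ∑ i, rect x₀ x₁ T (c i) • P i := by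
  have hf : ∀ i, ContinuousOn (fun z => c i z • P i) (bd x₀ x₁ T) :=
    fun i => (hc i).smul continuousOn_const
  simp only [rect]
  rw [intervalIntegral.integral_finsetSum fun i _ => int_1 h hT (hf i),
    intervalIntegral.integral_finsetSum fun i _ => int_2 h hT (hf i),
    intervalIntegral.integral_finsetSum fun i _ => int_3 hT (hf i),
    intervalIntegral.integral_finsetSum fun i _ => int_4 hT (hf i)]
  simp only [Finset.smul_sum, intervalIntegral.integral_smul_const, sub_smul, add_smul,
    Finset.sum_sub_distrib, Finset.sum_add_distrib, smul_assoc]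

theorem rect_norm_le (h : x₀ ≤ x₁) (hT : 0 < T) {f : ℂ → V} {g : ℂ → ℝ}
    (hg : ContinuousOn g (bd x₀ x₁ T)) (hfg : ∀ z ∈ bd x₀ x₁ T, ‖f z‖ ≤ g z) :
    ‖rect x₀ x₁ T f‖ ≤ (∫ t in (-T)..T, g (x₀ + t * Complex.I))
      + (∫ x in x₀..x₁, g (x + T * Complex.I))
      + (∫ t in (-T)..T, g (x₁ + t * Complex.I))
      + (∫ x in x₀..x₁, g (x - T * Complex.I)) := by
  have hT' : -T ≤ T := by linarith
  have k1 := intervalIntegral.norm_integral_le_of_norm_le (f := fun x : ℝ => f (x - T * Complex.I)) h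
    (Filter.Eventually.of_forall fun x hx => hfg _ (bd_1 hT (Set.Ioc_subset_Icc_self hx))) (int_1 h hT hg)
  have k2 := intervalIntegral.norm_integral_le_of_norm_le (f := fun x : ℝ => f (x + T * Complex.I)) h
    (Filter.Eventually.of_forall fun x hx => hfg _ (bd_2 hT (Set.Ioc_subset_Icc_self hx))) (int_2 h hT hg)
  have k3 := intervalIntegral.norm_integral_le_of_norm_le (f := fun t : ℝ => f (x₁ + t * Complex.I)) hT'
    (Filter.Eventually.of_forall fun x hx => hfg _ (bd_3 (Set.Ioc_subset_Icc_self hx))) (int_3 hT hg)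
  have k4 := intervalIntegral.norm_integral_le_of_norm_le (f := fun t : ℝ => f (x₀ + t * Complex.I)) hT'
    (Filter.Eventually.of_forall fun x hx => hfg _ (bd_4 (Set.Ioc_subset_Icc_self hx))) (int_4 hT hg)
  simp only [rect]
  refine (norm_sub_le _ _).trans ?_
  refine (add_le_add (norm_add_le _ _) le_rfl).trans ?_
  refine (add_le_add (add_le_add (norm_sub_le _ _) le_rfl) le_rfl).trans ?_
  rw [norm_smul, norm_smul, Complex.norm_I, one_mul, one_mul]
  linarith

end rectangle

theorem boot {n : ℕ} (X R S E : Matrix (Fin n) (Fin n) ℂ) (hR : X * R = 1)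
    (hS : (X - E) * S = 1) {d : ℝ} (hd : 0 < d) (hRn : ‖R‖ ≤ (d / 2)⁻¹) (hE : 4 * ‖E‖ ≤ d) :
    ‖S - R‖ ≤ 2 * ‖R * E * R‖ := by
  have hR' : R * X = 1 := _root_.mul_eq_one_comm.mp hR
  have h1 : S - R = R * E * S := by
    have : R * ((X - E) * S) = R := by rw [hS, mul_one]
    have h2 : R * ((X - E) * S) = S - R * E * S := by
      rw [sub_mul, mul_sub, ← mul_assoc, hR', one_mul, mul_assoc]
    rw [h2] at this
    rw [sub_eq_iff_eq_add, add_comm, ← sub_eq_iff_eq_add]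
    exact this
  have h2 : S - R = R * E * R + R * E * (S - R) := by
    rw [mul_sub, ← h1]; abel
  have h3 : ‖R * E‖ ≤ 1 / 2 := by
    calc ‖R * E‖ ≤ ‖R‖ * ‖E‖ := norm_mul_le _ _
      _ ≤ (d / 2)⁻¹ * (d / 4) := mul_le_mul hRn (by linarith) (norm_nonneg _) (by positivity)
      _ = 1 / 2 := by field_simp; norm_num
  have h4 : ‖S - R‖ ≤ ‖R * E * R‖ + 1 / 2 * ‖S - R‖ := by
    calc ‖S - R‖ = ‖R * E * R + R * E * (S - R)‖ := by rw [← h2]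
      _ ≤ ‖R * E * R‖ + ‖R * E * (S - R)‖ := norm_add_le _ _
      _ ≤ ‖R * E * R‖ + ‖R * E‖ * ‖S - R‖ := by gcongr; exact norm_mul_le _ _
      _ ≤ _ := by gcongr
  linarith

theorem main_fin {n : ℕ} (A E : Matrix (Fin n) (Fin n) ℝ) (hA : A.IsSymm) (hE : E.IsSymm)
    (l tl : Fin n → ℝ) (w tw : Fin n → Fin n → ℝ) (hl : Antitone l) (htl : Antitone tl)
    (hon : ∀ i j, w i ⬝ᵥ w j = if i = j then 1 else 0)
    (hton : ∀ i j, tw i ⬝ᵥ tw j = if i = j then 1 else 0)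
    (heig : ∀ i, A *ᵥ w i = l i • w i) (hteig : ∀ i, (A + E) *ᵥ tw i = tl i • tw i)
    (p q : Fin n) (hpq : (q : ℕ) = p + 1) (d : ℝ) (hd : d = l p - l q) (hd0 : 0 < d)
    (hgap : 4 * ‖E‖ ≤ d) (x₀ x₁ T : ℝ) (hx₀ : x₀ = l p - d / 2) (hx₁ : x₁ = 2 * ‖A‖)
    (hT : T = 2 * ‖A‖) :
    2 * Real.pi * ‖∑ i, (if i ≤ p then vecMulVec (tw i) (tw i) else 0)
      - ∑ i, (if i ≤ p then vecMulVec (w i) (w i) else 0)‖ ≤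
      2 * ((∫ t in (-T)..T, ‖res A (x₀ + t * Complex.I) * E.map Complex.ofReal
        * res A (x₀ + t * Complex.I)‖) +
      (∫ x in x₀..x₁, ‖res A (x + T * Complex.I) * E.map Complex.ofReal
        * res A (x + T * Complex.I)‖) +
      (∫ t in (-T)..T, ‖res A (x₁ + t * Complex.I) * E.map Complex.ofReal
        * res A (x₁ + t * Complex.I)‖) +
      (∫ x in x₀..x₁, ‖res A (x - T * Complex.I) * E.map Complex.ofReal
        * res A (x - T * Complex.I)‖)) := by
  have hla : ∀ i, |l i| ≤ ‖A‖ := fun i => abs_l_le A w l i (by simp [hon]) (heig i)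
  have htla : ∀ i, |tl i| ≤ ‖A‖ + ‖E‖ := fun i =>
    (abs_l_le (A + E) tw tl i (by simp [hton]) (hteig i)).trans (norm_add_le _ _)
  have hp := abs_le.mp (hla p)
  have hq := abs_le.mp (hla q)
  have hE0 := norm_nonneg E
  have hA0 : 0 < ‖A‖ := by linarith [hp.1, hp.2, hq.1, hq.2]
  have hT0 : 0 < T := by linarith
  have hx : x₀ ≤ x₁ := by linarith
  have hW1 := weyl A E hA hE w tw l tl (on_mul' w hon) (on_mul' tw hton) heig hteig hl htl p
  have hW2 := weyl (A + E) (-E) (hA.add hE) hE.neg tw w tl l (on_mul' tw hton) (on_mul' w hon)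
    hteig (by simpa using heig) htl hl q
  rw [norm_neg] at hW2
  have hcase : ∀ i : Fin n, i ≤ p ∨ q ≤ i := fun i => by
    rcases le_or_gt i p with h | h
    · exact Or.inl h
    · right
      rw [Fin.le_def, hpq]
      exact h
  have hnot : ∀ i : Fin n, q ≤ i → ¬ i ≤ p := fun i hi h => by
    have := hi.trans h
    rw [Fin.le_def, hpq] at this
    omega
  -- distances to the spectrum
  have hdist : ∀ z ∈ bd x₀ x₁ T, ∀ i, d / 2 ≤ ‖z - l i‖ := by
    intro z hz i
    have hi := abs_le.mp (hla i)
    have hre : |z.re - l i| ≤ ‖z - l i‖ := by simpa using Complex.abs_re_le_norm (z - l i)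
    have him : |z.im| ≤ ‖z - l i‖ := by simpa using Complex.abs_im_le_norm (z - l i)
    rcases hz with ⟨-, h⟩ | ⟨h | h, -⟩
    · linarith
    · refine le_trans ?_ hre
      rw [h]
      rcases hcase i with hc | hc
      · have := hl hc
        refine le_trans ?_ (neg_le_abs _)
        linarith
      · have := hl hc
        refine le_trans ?_ (le_abs_self _)
        linarith
    · refine le_trans ?_ hre
      refine le_trans ?_ (le_abs_self _)
      linarith
  have htne : ∀ z ∈ bd x₀ x₁ T, ∀ i, z ≠ tl i := by
    rintro z hz i rfl
    have hi := abs_le.mp (htla i)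
    rcases hz with ⟨-, h⟩ | ⟨h | h, -⟩
    · simp at h; linarith
    · simp at h
      rcases hcase i with hc | hc
      · have := htl hc
        linarith
      · have := htl hc
        linarith
    · simp at h; linarith
  have hne : ∀ z ∈ bd x₀ x₁ T, ∀ i, z ≠ l i := by
    intro z hz i h
    have := hdist z hz i
    rw [h, sub_self, norm_zero] at this
    linarith
  have hR : ∀ z ∈ bd x₀ x₁ T, res A z = ∑ i, (z - l i)⁻¹ • PC (w i) :=
    fun z hz => res_eq' A w l hon heig z (hne z hz)
  have hcA : ∀ i, ContinuousOn (fun z : ℂ => (z - l i)⁻¹) (bd x₀ x₁ T) := fun i =>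
    ContinuousOn.inv₀ (by fun_prop) fun z hz => sub_ne_zero.mpr (hne z hz i)
  have hcB : ∀ i, ContinuousOn (fun z : ℂ => (z - tl i)⁻¹) (bd x₀ x₁ T) := fun i =>
    ContinuousOn.inv₀ (by fun_prop) fun z hz => sub_ne_zero.mpr (htne z hz i)
  have hsA : ContinuousOn (fun z : ℂ => ∑ i, (z - l i)⁻¹ • PC (w i)) (bd x₀ x₁ T) :=
    continuousOn_finsetSum _ fun i _ => (hcA i).smul continuousOn_const
  have hsB : ContinuousOn (fun z : ℂ => ∑ i, (z - tl i)⁻¹ • PC (tw i)) (bd x₀ x₁ T) :=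
    continuousOn_finsetSum _ fun i _ => (hcB i).smul continuousOn_const
  have hRc : ContinuousOn (res A) (bd x₀ x₁ T) := hsA.congr hR
  have key := rect_norm_le (V := Matrix (Fin n) (Fin n) ℂ) hx hT0
    (f := fun z => (∑ i, (z - tl i)⁻¹ • PC (tw i)) - (∑ i, (z - l i)⁻¹ • PC (w i)))
    (g := fun z => 2 * ‖res A z * E.map Complex.ofReal * res A z‖)
    (continuousOn_const.mul ((hRc.mul continuousOn_const).mul hRc).norm) (by
      intro z hz
      rw [hR z hz]
      refine boot (z • (1 : Matrix (Fin n) (Fin n) ℂ) - A.map Complex.ofReal) _ _ _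
        (res_eq A w l hon heig z (hne z hz)) ?_ hd0 ?_ ((mul_le_mul_of_nonneg_left (norm_map_le E) (by norm_num)).trans hgap)
      · have := res_eq (A + E) tw tl hton hteig z (htne z hz)
        rw [Matrix.map_add _ (fun a b => Complex.ofReal_add a b), ← sub_sub] at this
        exact this
      · refine norm_sum_PC_le w hon _ _ (by positivity) fun i => ?_
        rw [norm_inv]
        exact inv_anti₀ (by positivity) (hdist z hz i))
  rw [rect_sub hx hT0 hsB hsA, rect_sum hx hT0 _ _ hcA, rect_sum hx hT0 _ _ hcB] at key
  have s1 : ∀ i, rect x₀ x₁ T (fun z : ℂ => (z - l i)⁻¹) • PC (w i) =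
      (2 * Real.pi * Complex.I) • (if i ≤ p then vecMulVec (w i) (w i) else 0).map Complex.ofReal := by
    intro i
    have hi := abs_le.mp (hla i)
    rcases hcase i with hc | hc
    · have := hl hc
      rw [if_pos hc, rect_in hT0 _ (by linarith) (by linarith)]
      rfl
    · have := hl hc
      rw [if_neg (hnot i hc), rect_zero hx _ (by linarith), zero_smul, Matrix.map_zero _ Complex.ofReal_zero, smul_zero]
  have s2 : ∀ i, rect x₀ x₁ T (fun z : ℂ => (z - tl i)⁻¹) • PC (tw i) =
      (2 * Real.pi * Complex.I) • (if i ≤ p then vecMulVec (tw i) (tw i) else 0).map Complex.ofReal := by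
    intro i
    have hi := abs_le.mp (htla i)
    rcases hcase i with hc | hc
    · have := htl hc
      rw [if_pos hc, rect_in hT0 _ (by linarith) (by linarith)]
      rfl
    · have := htl hc
      rw [if_neg (hnot i hc), rect_zero hx _ (by linarith), zero_smul, Matrix.map_zero _ Complex.ofReal_zero, smul_zero]
  simp only [s1, s2, ← Finset.smul_sum, ← smul_sub, intervalIntegral.integral_const_mul] at key
  rw [norm_smul] at key
  have hc : ‖(2 * Real.pi * Complex.I : ℂ)‖ = 2 * Real.pi := by
    simp [abs_of_pos Real.pi_pos]
  rw [hc] at key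
  have hm : (∑ i, (if i ≤ p then vecMulVec (tw i) (tw i) else 0)
      - ∑ i, (if i ≤ p then vecMulVec (w i) (w i) else 0)).map Complex.ofReal =
      ∑ i, (if i ≤ p then vecMulVec (tw i) (tw i) else 0).map Complex.ofReal
      - ∑ i, (if i ≤ p then vecMulVec (w i) (w i) else 0).map Complex.ofReal := by
    ext a b
    simp [Matrix.sum_apply]
  rw [← hm] at key
  have := mul_le_mul_of_nonneg_left (norm_le_map (∑ i, (if i ≤ p then vecMulVec (tw i) (tw i) else 0)
      - ∑ i, (if i ≤ p then vecMulVec (w i) (w i) else 0))) (by positivity : (0:ℝ) ≤ 2 * Real.pi)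
  linarith

theorem sum_Icc_eq {n : ℕ} {V : Type*} [AddCommMonoid V] (f : ℕ → V) (p : ℕ) (hp1 : 1 ≤ p) (hpn : p < n) :
    ∑ i ∈ Finset.Icc 1 p, f i =
      ∑ i : Fin n, if i ≤ (⟨p - 1, by omega⟩ : Fin n) then f (i + 1) else 0 := by
  rw [← Finset.sum_filter]
  symm
  refine Finset.sum_bij (fun i _ => (i : ℕ) + 1) ?_ ?_ ?_ ?_
  · intro i hi
    simp only [Finset.mem_filter, Fin.le_def] at hi
    rw [Finset.mem_Icc]; have := hi.2; omega
  · intro i _ j _ h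
    exact Fin.ext (by simpa using h)
  · intro k hk
    rw [Finset.mem_Icc] at hk
    refine ⟨⟨k - 1, by omega⟩, ?_, ?_⟩
    · simp [Fin.le_def]; omega
    · simp; omega
  · intro i _; rfl

/-- **Key lemma (contour bootstrapping).** If `δ_p ≥ 4‖E‖` then
`‖Π̃_p − Π_p‖ ≤ 2F₁`. (Indices are 1-based; `σ₁ = ‖A‖`, `x₀ = λ_p − δ_p/2`,
`x₁ = T = 2σ₁`.) -/
theorem key_lemma_bootstrapping
    {n : ℕ} (A E : Matrix (Fin n) (Fin n) ℝ) (hA : A.IsSymm) (hE : E.IsSymm)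
    (lam tlam : ℕ → ℝ) (u tu : ℕ → (Fin n → ℝ))
    (hlam_mono : ∀ i ∈ Finset.Icc 1 n, ∀ j ∈ Finset.Icc 1 n, i ≤ j → lam j ≤ lam i)
    (htlam_mono : ∀ i ∈ Finset.Icc 1 n, ∀ j ∈ Finset.Icc 1 n, i ≤ j → tlam j ≤ tlam i)
    (hu_on : ∀ i ∈ Finset.Icc 1 n, ∀ j ∈ Finset.Icc 1 n,
      u i ⬝ᵥ u j = if i = j then 1 else 0)
    (htu_on : ∀ i ∈ Finset.Icc 1 n, ∀ j ∈ Finset.Icc 1 n,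
      tu i ⬝ᵥ tu j = if i = j then 1 else 0)
    (hu_eig : ∀ i ∈ Finset.Icc 1 n, A *ᵥ u i = lam i • u i)
    (htu_eig : ∀ i ∈ Finset.Icc 1 n, (A + E) *ᵥ tu i = tlam i • tu i)
    (p : ℕ) (hp1 : 1 ≤ p) (hpn : p < n)
    (δp : ℝ) (hδp : δp = lam p - lam (p + 1))
    (hδp_pos : 0 < δp) (hgap : 4 * specNorm E ≤ δp)
    (x₀ x₁ T : ℝ) (hx₀ : x₀ = lam p - δp / 2)
    (hx₁ : x₁ = 2 * specNorm A) (hT : T = 2 * specNorm A)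
    (M1 M2 M3 M4 F1 : ℝ)
    (hM1 : M1 = ∫ t in (-T)..T, specNorm
      (res A (x₀ + t * Complex.I) * E.map Complex.ofReal
        * res A (x₀ + t * Complex.I)))
    (hM2 : M2 = ∫ x in x₀..x₁, specNorm
      (res A (x + T * Complex.I) * E.map Complex.ofReal
        * res A (x + T * Complex.I)))
    (hM3 : M3 = ∫ t in (-T)..T, specNorm
      (res A (x₁ + t * Complex.I) * E.map Complex.ofReal
        * res A (x₁ + t * Complex.I)))
    (hM4 : M4 = ∫ x in x₀..x₁, specNorm
      (res A (x - T * Complex.I) * E.map Complex.ofReal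
        * res A (x - T * Complex.I)))
    (hF1 : F1 = 1 / (2 * Real.pi) * (M1 + M2 + M3 + M4)) :
    specNorm ((∑ i ∈ Finset.Icc 1 p, vecMulVec (tu i) (tu i))
        - ∑ i ∈ Finset.Icc 1 p, vecMulVec (u i) (u i))
      ≤ 2 * F1 := by
  have hmem : ∀ i : Fin n, (i : ℕ) + 1 ∈ Finset.Icc 1 n := fun i => by
    rw [Finset.mem_Icc]; have := i.2; omega
  have hp' : p - 1 + 1 = p := by omega
  have main := main_fin A E hA hE (fun i => lam (i + 1)) (fun i => tlam (i + 1))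
    (fun i => u (i + 1)) (fun i => tu (i + 1))
    (fun i j hij => hlam_mono _ (hmem i) _ (hmem j) (Nat.succ_le_succ hij))
    (fun i j hij => htlam_mono _ (hmem i) _ (hmem j) (Nat.succ_le_succ hij))
    (fun i j => by rw [hu_on _ (hmem i) _ (hmem j)]; simp [Fin.ext_iff])
    (fun i j => by rw [htu_on _ (hmem i) _ (hmem j)]; simp [Fin.ext_iff])
    (fun i => hu_eig _ (hmem i)) (fun i => htu_eig _ (hmem i))
    ⟨p - 1, by omega⟩ ⟨p, hpn⟩ hp'.symm δp (by simp only [hp']; exact hδp) hδp_pos hgap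
    x₀ x₁ T (by simp only [hp']; exact hx₀) hx₁ hT
  simp only [specNorm_eq] at hM1 hM2 hM3 hM4 ⊢
  rw [← hM1, ← hM2, ← hM3, ← hM4] at main
  rw [sum_Icc_eq (fun i => vecMulVec (tu i) (tu i)) p hp1 hpn,
    sum_Icc_eq (fun i => vecMulVec (u i) (u i)) p hp1 hpn, hF1]
  have hpi := Real.pi_pos
  have h2 : 2 * (1 / (2 * Real.pi) * (M1 + M2 + M3 + M4)) =
      (2 * (M1 + M2 + M3 + M4)) / (2 * Real.pi) := by ring
  rw [h2, le_div_iff₀ (by positivity), mul_comm]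
  exact main
end

section
/- Let T > 0, L > 0, and 0 < δ ≤ L/4. Then ∫_{0}^{T} dt / √( (t² + (δ/2)²)(t² + (L/4)²) ) ≤ (16/L)·log( (2T + δ)/δ ). -/
/-- **Technical logarithmic integral bound** (inequality (5.8) of the paper):
for `T > 0`, `L > 0` and `0 < δ ≤ L/4`,
`∫₀ᵀ dt / √((t² + (δ/2)²)(t² + (L/4)²)) ≤ (16/L)·log((2T + δ)/δ)`. -/
theorem integral_log_bound
    (T L δ : ℝ) (hT : 0 < T) (hL : 0 < L) (hδ : 0 < δ) (hδL : δ ≤ L / 4) :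
    (∫ t in (0:ℝ)..T,
      1 / Real.sqrt ((t ^ 2 + (δ / 2) ^ 2) * (t ^ 2 + (L / 4) ^ 2)))
      ≤ 16 / L * Real.log ((2 * T + δ) / δ) := by
  have key : (∫ t in (0:ℝ)..T, 16 / L * (1 / (t + δ / 2)))
      = 16 / L * Real.log ((2 * T + δ) / δ) := by
    rw [intervalIntegral.integral_const_mul,
      intervalIntegral.integral_comp_add_right (fun x : ℝ => 1 / x) (δ / 2),
      integral_one_div_of_pos (by positivity) (by positivity)]
    congr 2
    field_simp
    ring
  rw [← key]
  apply intervalIntegral.integral_mono_on hT.le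
  · apply Continuous.intervalIntegrable
    refine Continuous.div continuous_const (by fun_prop) ?_
    intro t
    positivity
  · apply ContinuousOn.intervalIntegrable
    rw [Set.uIcc_of_le hT.le]
    refine ContinuousOn.mul continuousOn_const
      (ContinuousOn.div continuousOn_const (by fun_prop) ?_)
    intro t ht
    have := ht.1
    positivity
  · intro t ht
    have h0 := ht.1
    have h1 : L / 16 * (t + δ / 2)
        ≤ Real.sqrt ((t ^ 2 + (δ / 2) ^ 2) * (t ^ 2 + (L / 4) ^ 2)) := by
      apply Real.le_sqrt_of_sq_le
      have e1 : (t + δ / 2) ^ 2 ≤ 2 * (t ^ 2 + (δ / 2) ^ 2) := by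
        nlinarith [sq_nonneg (t - δ / 2)]
      have e2 : (L / 16) ^ 2 * 2 ≤ t ^ 2 + (L / 4) ^ 2 := by
        nlinarith [sq_nonneg t, sq_nonneg L]
      calc (L / 16 * (t + δ / 2)) ^ 2 = (L / 16) ^ 2 * (t + δ / 2) ^ 2 := by ring
        _ ≤ (L / 16) ^ 2 * (2 * (t ^ 2 + (δ / 2) ^ 2)) := by gcongr
        _ = (t ^ 2 + (δ / 2) ^ 2) * ((L / 16) ^ 2 * 2) := by ring
        _ ≤ _ := by gcongr
    have h2 : 16 / L * (1 / (t + δ / 2)) = 1 / (L / 16 * (t + δ / 2)) := by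
      field_simp
    rw [h2]
    exact one_div_le_one_div_of_le (by positivity) h1
end
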